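/- Let F be a field of characteristic 0 or at least 5, n ≥ 1, β ∈ F with β ∉ {−1, 0, 1}, and let f ∈ F[x_1,…,x_{2n}, y_1,…,y_{2n}] be multilinear and agree with 1/Q on the Boolean cube. Then for all A, B ⊆ [2n] with |A| + |B| = 2n such that there is no σ ∈ {0,1}^n with A = S_σ and B = [2n]∖S_σ, the coefficient in f of the monomial x_A · y_B is 0. (That is, the only degree-2n monomials of f with nonzero coefficients are the monomials x_{S_σ}·y_{[2n]∖S_σ} for σ ∈ {0,1}^n.) -/

import Mathlib

open MvPolynomial

/-- The polynomial `Q̃ := ∏_{i=1}^{n} (x_{2i−1}·y_{2i} − y_{2i−1}·x_{2i})` in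
`F[x_1,…,x_{2n}, y_1,…,y_{2n}]`, with the `x`-variables indexed by `Sum.inl` and the
`y`-variables by `Sum.inr` (0-based indexing). -/
noncomputable def Qtilde (F : Type*) [Field F] (n : ℕ) :
    MvPolynomial (Fin (2 * n) ⊕ Fin (2 * n)) F :=
  ∏ i : Fin n,
    (X (Sum.inl ⟨2 * i.1, by have := i.2; omega⟩) * X (Sum.inr ⟨2 * i.1 + 1, by have := i.2; omega⟩)
      - X (Sum.inr ⟨2 * i.1, by have := i.2; omega⟩) * X (Sum.inl ⟨2 * i.1 + 1, by have := i.2; omega⟩))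

/-- For `i ∈ [n]` and a bit `b`, the element of `[2n]` belonging to the `i`-th pair:
`2i−1` (0-based: `2i`) if `b = false`, and `2i` (0-based: `2i+1`) if `b = true`. -/
def pairIdx (n : ℕ) (i : Fin n) (b : Bool) : Fin (2 * n) :=
  if b then ⟨2 * i.1 + 1, by have := i.2; omega⟩ else ⟨2 * i.1, by have := i.2; omega⟩

/-- The set `S_σ := { 2i−1 : i ∈ [n], σ_i = 0 } ∪ { 2i : i ∈ [n], σ_i = 1 } ⊆ [2n]`. -/
def Ssig (n : ℕ) (σ : Fin n → Bool) : Finset (Fin (2 * n)) :=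
  Finset.image (fun i : Fin n => pairIdx n i (σ i)) Finset.univ

/-- The exponent vector of the multilinear monomial `x_A · y_B` for `A, B ⊆ [2n]`. -/
noncomputable def setMonomial (n : ℕ) (A B : Finset (Fin (2 * n))) :
    (Fin (2 * n) ⊕ Fin (2 * n)) →₀ ℕ :=
  (∑ i ∈ A, Finsupp.single (Sum.inl i) 1) + ∑ i ∈ B, Finsupp.single (Sum.inr i) 1

/-!
On the Boolean cube the products `u = x_{2i-1} y_{2i}` and `v = y_{2i-1} x_{2i}` are idempotent.
Hence `Q̃ = ∏ (u - v)` takes only the values `-1, 0, 1`, and `Q̃ ^ 2` coincides with the multilinear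
polynomial `∏ (u + v - 2 u v)`. Interpolating at `-1, 0, 1`, any function of `Q̃`, such as
`1 / (Q̃ - β)`, is therefore represented on the cube by a linear combination of `1`, `Q̃` and this
product. In the last two, each of the `n` factors contributes degree at least `2` to a monomial,
and exactly `2` only when it contributes `u` or `v` alone; this choice is the bit `σ i`.
-/

section Polynomials

variable {σ R : Type*}

lemma exists_mem_support_of_mem_support_prod [CommSemiring R] {ι : Type*} {s : Finset ι}
    {p : ι → MvPolynomial σ R} {m : σ →₀ ℕ} (hm : m ∈ (∏ i ∈ s, p i).support) :
    ∃ d : ι → σ →₀ ℕ, (∀ i ∈ s, d i ∈ (p i).support) ∧ m = ∑ i ∈ s, d i := by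
  classical
  induction s using Finset.cons_induction generalizing m with
  | empty =>
    rw [Finset.prod_empty, mem_support_iff, coeff_one, ne_eq, ite_eq_right_iff] at hm
    exact ⟨0, by simp, by simpa using (Classical.not_imp.1 hm).1.symm⟩
  | cons j s hj ih =>
    rw [Finset.prod_cons] at hm
    obtain ⟨a, ha, b, hb, rfl⟩ := Finset.mem_add.1 (support_mul _ _ hm)
    obtain ⟨d, hd, rfl⟩ := ih hb
    have hd_ne : ∀ i ∈ s, Function.update d j a i = d i := fun i hi =>
      Function.update_of_ne (ne_of_mem_of_not_mem hi hj) a d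
    refine ⟨Function.update d j a, ?_, ?_⟩
    · rw [Finset.forall_mem_cons, Function.update_self]
      exact ⟨ha, fun i hi => (hd_ne i hi).symm ▸ hd i hi⟩
    · rw [Finset.sum_cons, Function.update_self, Finset.sum_congr rfl hd_ne]

lemma eq_of_degreeOf_le_one_of_eval_eq [CommRing R] [IsDomain R] [Finite σ]
    {p q : MvPolynomial σ R} (hp : ∀ v, p.degreeOf v ≤ 1) (hq : ∀ v, q.degreeOf v ≤ 1)
    (h : ∀ x : σ → R, (∀ v, x v = 0 ∨ x v = 1) → eval x p = eval x q) : p = q := by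
  classical
  refine sub_eq_zero.1 (eq_zero_of_eval_zero_at_prod_finset _ (fun _ => {0, 1}) (fun v => ?_) ?_)
  · rw [Finset.card_pair zero_ne_one]
    exact Nat.lt_succ_of_le ((degreeOf_sub_le v p q).trans (max_le (hp v) (hq v)))
  · intro x hx
    rw [map_sub, h x fun v => by simpa using hx v, sub_self]

lemma exists_quadratic_eq_on {F : Type*} [Field F] {s : Finset F} (hs : s.card ≤ 3) (φ : F → F) :
    ∃ a b c : F, ∀ z ∈ s, φ z = a + b * z + c * z ^ 2 := by
  classical
  have hinj : Set.InjOn id (s : Set F) := Function.injective_id.injOn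
  set p := Lagrange.interpolate s id φ
  have hdeg : p.natDegree ≤ 2 :=
    (Polynomial.natDegree_le_of_degree_le (Lagrange.degree_interpolate_le φ hinj)).trans (by omega)
  refine ⟨p.coeff 0, p.coeff 1, p.coeff 2, fun z hz => ?_⟩
  calc φ z = p.eval z := (Lagrange.eval_interpolate_at_node φ hinj hz).symm
    _ = ∑ k ∈ Finset.range 3, p.coeff k * z ^ k :=
      Polynomial.eval_eq_sum_range' (Nat.lt_succ_of_le hdeg) z
    _ = p.coeff 0 + p.coeff 1 * z + p.coeff 2 * z ^ 2 := by
      simp only [Finset.sum_range_succ, Finset.sum_range_zero, pow_zero, pow_one, mul_one, zero_add]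

end Polynomials

section Indices

variable {n : ℕ}

lemma pairIdx_inj {i j : Fin n} {b c : Bool} :
    pairIdx n i b = pairIdx n j c ↔ i = j ∧ b = c := by
  cases b <;> cases c <;> simp [pairIdx, Fin.ext_iff] <;> omega

lemma exists_pairIdx_eq (k : Fin (2 * n)) : ∃ i b, pairIdx n i b = k := by
  refine ⟨⟨k / 2, by omega⟩, decide (k.1 % 2 = 1), ?_⟩
  by_cases h : k.1 % 2 = 1 <;> simp [pairIdx, Fin.ext_iff, h] <;> omega

lemma pairIdx_mem_Ssig {σ : Fin n → Bool} {i : Fin n} {b : Bool} :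
    pairIdx n i b ∈ Ssig n σ ↔ b = σ i := by
  simp [Ssig, pairIdx_inj, eq_comm]

end Indices

section Exponents

variable {n : ℕ}

lemma setMonomial_inl (A B : Finset (Fin (2 * n))) (k : Fin (2 * n)) :
    setMonomial n A B (Sum.inl k) = if k ∈ A then 1 else 0 := by
  simp [setMonomial, Finsupp.single_apply]

lemma setMonomial_inr (A B : Finset (Fin (2 * n))) (k : Fin (2 * n)) :
    setMonomial n A B (Sum.inr k) = if k ∈ B then 1 else 0 := by
  simp [setMonomial, Finsupp.single_apply]

lemma degree_setMonomial (A B : Finset (Fin (2 * n))) :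
    (setMonomial n A B).degree = A.card + B.card := by
  simp [setMonomial, map_sum]

/-- The exponent vector of the cross term `x_k y_l`, where `{k, l}` is the `i`-th pair and the bit
`b` selects `k`. -/
noncomputable def crossExponent (i : Fin n) (b : Bool) : (Fin (2 * n) ⊕ Fin (2 * n)) →₀ ℕ :=
  Finsupp.single (Sum.inl (pairIdx n i b)) 1 + Finsupp.single (Sum.inr (pairIdx n i !b)) 1

lemma sum_crossExponent_inl (T : Fin n → Finset Bool) (j : Fin n) (c : Bool) :
    (∑ i, ∑ b ∈ T i, crossExponent i b) (Sum.inl (pairIdx n j c)) = if c ∈ T j then 1 else 0 := by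
  simp [crossExponent, Finsupp.finsetSum_apply, Finsupp.single_apply, pairIdx_inj, ite_and]

lemma sum_crossExponent_inr (T : Fin n → Finset Bool) (j : Fin n) (c : Bool) :
    (∑ i, ∑ b ∈ T i, crossExponent i b) (Sum.inr (pairIdx n j !c)) =
      if c ∈ T j then 1 else 0 := by
  simp [crossExponent, Finsupp.finsetSum_apply, Finsupp.single_apply, pairIdx_inj, ite_and]

lemma sum_crossExponent_le_one (T : Fin n → Finset Bool) (v : Fin (2 * n) ⊕ Fin (2 * n)) :
    (∑ i, ∑ b ∈ T i, crossExponent i b) v ≤ 1 := by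
  rcases v with k | k <;> obtain ⟨j, c, rfl⟩ := exists_pairIdx_eq k
  · rw [sum_crossExponent_inl]
    split_ifs <;> simp
  · rw [← Bool.not_not c, sum_crossExponent_inr]
    split_ifs <;> simp

lemma degree_sum_crossExponent (T : Fin n → Finset Bool) :
    (∑ i, ∑ b ∈ T i, crossExponent i b).degree = 2 * ∑ i, (T i).card := by
  simp [crossExponent, map_sum, Finset.mul_sum, mul_comm]

lemma exists_eq_Ssig_of_setMonomial_eq_sum_crossExponent {A B : Finset (Fin (2 * n))}
    (hAB : A.card + B.card = 2 * n) {T : Fin n → Finset Bool} (hT : ∀ i, (T i).Nonempty)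
    (h : setMonomial n A B = ∑ i, ∑ b ∈ T i, crossExponent i b) :
    ∃ σ : Fin n → Bool, A = Ssig n σ ∧ B = (Ssig n σ)ᶜ := by
  have hsum : ∑ _i : Fin n, 1 = ∑ i, (T i).card := by
    have hdeg := congrArg Finsupp.degree h
    rw [degree_setMonomial, degree_sum_crossExponent, hAB] at hdeg
    simpa using hdeg
  have hcard : ∀ i, (T i).card = 1 := fun i =>
    ((Finset.sum_eq_sum_iff_of_le fun i _ => (hT i).card_pos).1 hsum i (Finset.mem_univ i)).symm
  choose σ hσ using fun i => Finset.card_eq_one.1 (hcard i)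
  have hA : ∀ i b, pairIdx n i b ∈ A ↔ b = σ i := fun i b => by
    have := DFunLike.congr_fun h (Sum.inl (pairIdx n i b))
    simp only [setMonomial_inl, sum_crossExponent_inl, hσ, Finset.mem_singleton] at this
    split_ifs at this <;> simp_all only
  have hB : ∀ i b, pairIdx n i (!b) ∈ B ↔ b = σ i := fun i b => by
    have := DFunLike.congr_fun h (Sum.inr (pairIdx n i !b))
    simp only [setMonomial_inr, sum_crossExponent_inr, hσ, Finset.mem_singleton] at this
    split_ifs at this <;> simp_all only
  refine ⟨σ, ?_, ?_⟩ <;> ext k <;> obtain ⟨i, b, rfl⟩ := exists_pairIdx_eq k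
  · rw [hA, pairIdx_mem_Ssig]
  · rw [← Bool.not_not b, hB, Finset.mem_compl, pairIdx_mem_Ssig, Bool.not_not]
    exact Bool.not_eq_iff

end Exponents

section CrossTerms

variable {R : Type*} [CommSemiring R] {n : ℕ}

/-- The cross term `x_k y_l`, where `{k, l}` is the `i`-th pair and the bit `b` selects `k`. -/
noncomputable def crossTerm (R : Type*) [CommSemiring R] {n : ℕ} (i : Fin n) (b : Bool) :
    MvPolynomial (Fin (2 * n) ⊕ Fin (2 * n)) R :=
  X (Sum.inl (pairIdx n i b)) * X (Sum.inr (pairIdx n i !b))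

lemma crossTerm_eq_monomial (i : Fin n) (b : Bool) :
    crossTerm R i b = monomial (crossExponent i b) 1 := by
  rw [crossTerm, X, X, monomial_mul, one_mul, crossExponent]

/-- The product over all pairs of `a u + b v + c u v`, where `u` and `v` are the two cross terms of
the pair. Both `Q̃` and the multilinear representative of `Q̃ ^ 2` on the Boolean cube have this
form. -/
noncomputable def crossTermProduct (n : ℕ) (a b c : R) :
    MvPolynomial (Fin (2 * n) ⊕ Fin (2 * n)) R :=
  ∏ i : Fin n, (C a * crossTerm R i false + C b * crossTerm R i true +
    C c * (crossTerm R i false * crossTerm R i true))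

lemma isIdempotentElem_eval_crossTerm {x : Fin (2 * n) ⊕ Fin (2 * n) → R}
    (hx : ∀ v, IsIdempotentElem (x v)) (i : Fin n) (b : Bool) :
    IsIdempotentElem (eval x (crossTerm R i b)) := by
  rw [crossTerm, map_mul, eval_X, eval_X]
  exact (hx _).mul (hx _)

lemma exists_eq_sum_crossExponent_of_mem_support_factor {i : Fin n} {a b c : R}
    {m : (Fin (2 * n) ⊕ Fin (2 * n)) →₀ ℕ}
    (hm : m ∈ (C a * crossTerm R i false + C b * crossTerm R i true +
      C c * (crossTerm R i false * crossTerm R i true)).support) :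
    ∃ S : Finset Bool, S.Nonempty ∧ m = ∑ t ∈ S, crossExponent i t := by
  classical
  simp only [crossTerm_eq_monomial, monomial_mul, C_mul_monomial, mul_one, mem_support_iff,
    coeff_add, coeff_monomial] at hm
  by_contra! hS
  have hfalse : crossExponent i false ≠ m := by
    simpa using (hS {false} (Finset.singleton_nonempty _)).symm
  have htrue : crossExponent i true ≠ m := by
    simpa using (hS {true} (Finset.singleton_nonempty _)).symm
  have hboth : crossExponent i false + crossExponent i true ≠ m := by
    simpa [add_comm] using (hS Finset.univ Finset.univ_nonempty).symm
  simp [hfalse, htrue, hboth] at hm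

lemma exists_eq_sum_crossExponent_of_mem_support {a b c : R}
    {m : (Fin (2 * n) ⊕ Fin (2 * n)) →₀ ℕ} (hm : m ∈ (crossTermProduct n a b c).support) :
    ∃ T : Fin n → Finset Bool, (∀ i, (T i).Nonempty) ∧ m = ∑ i, ∑ t ∈ T i, crossExponent i t := by
  obtain ⟨d, hd, rfl⟩ := exists_mem_support_of_mem_support_prod hm
  choose T hT hdT using fun i =>
    exists_eq_sum_crossExponent_of_mem_support_factor (hd i (Finset.mem_univ i))
  exact ⟨T, hT, Finset.sum_congr rfl fun i _ => hdT i⟩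

lemma degreeOf_crossTermProduct_le_one (a b c : R) (v : Fin (2 * n) ⊕ Fin (2 * n)) :
    (crossTermProduct n a b c).degreeOf v ≤ 1 := by
  refine degreeOf_le_iff.2 fun m hm => ?_
  obtain ⟨T, -, rfl⟩ := exists_eq_sum_crossExponent_of_mem_support hm
  exact sum_crossExponent_le_one T v

lemma coeff_setMonomial_crossTermProduct_eq_zero (a b c : R) {A B : Finset (Fin (2 * n))}
    (hAB : A.card + B.card = 2 * n)
    (hns : ¬ ∃ σ : Fin n → Bool, A = Ssig n σ ∧ B = (Ssig n σ)ᶜ) :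
    coeff (setMonomial n A B) (crossTermProduct n a b c) = 0 := by
  by_contra hm
  obtain ⟨T, hT, h⟩ := exists_eq_sum_crossExponent_of_mem_support (mem_support_iff.2 hm)
  exact hns (exists_eq_Ssig_of_setMonomial_eq_sum_crossExponent hAB hT h)

end CrossTerms

section EvalQtilde

variable {F : Type*} [Field F] {n : ℕ}

lemma Qtilde_eq_prod_crossTerm :
    Qtilde F n = ∏ i : Fin n, (crossTerm F i false - crossTerm F i true) :=
  Finset.prod_congr rfl fun _ _ => congrArg _ (mul_comm _ _)

lemma Qtilde_eq_crossTermProduct : Qtilde F n = crossTermProduct n 1 (-1) 0 := by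
  rw [Qtilde_eq_prod_crossTerm, crossTermProduct]
  refine Finset.prod_congr rfl fun i _ => ?_
  simp only [C_1, C_0, C_neg]
  ring

variable {x : Fin (2 * n) ⊕ Fin (2 * n) → F} (hx : ∀ v, IsIdempotentElem (x v))
include hx

lemma eval_Qtilde_sq : eval x (Qtilde F n) ^ 2 = eval x (crossTermProduct n 1 1 (-2)) := by
  rw [Qtilde_eq_prod_crossTerm, crossTermProduct, map_prod, map_prod, ← Finset.prod_pow]
  refine Finset.prod_congr rfl fun i _ => ?_
  have hu := (isIdempotentElem_eval_crossTerm hx i false).eq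
  have hv := (isIdempotentElem_eval_crossTerm hx i true).eq
  simp only [map_sub, map_add, map_mul, eval_C]
  linear_combination hu + hv

lemma eval_Qtilde_pow_three : eval x (Qtilde F n) ^ 3 = eval x (Qtilde F n) := by
  rw [Qtilde_eq_prod_crossTerm, map_prod, ← Finset.prod_pow]
  refine Finset.prod_congr rfl fun i _ => ?_
  rw [map_sub]
  set u := eval x (crossTerm F i false)
  set v := eval x (crossTerm F i true)
  have hu : u * u = u := isIdempotentElem_eval_crossTerm hx i false
  have hv : v * v = v := isIdempotentElem_eval_crossTerm hx i true
  linear_combination (u + 1 - 3 * v) * hu + (3 * u - v - 1) * hv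

lemma eval_Qtilde_mem [DecidableEq F] : eval x (Qtilde F n) ∈ ({-1, 0, 1} : Finset F) := by
  set z := eval x (Qtilde F n)
  have hfactor : z * ((z + 1) * (z - 1)) = 0 := by
    linear_combination eval_Qtilde_pow_three hx
  rcases mul_eq_zero.1 hfactor with h | h
  · simp [h]
  rcases mul_eq_zero.1 h with h | h
  · simp [eq_neg_of_add_eq_zero_left h]
  · simp [sub_eq_zero.1 h]

end EvalQtilde

theorem exists_eq_quadratic_of_eval_eq_comp_Qtilde {F : Type*} [Field F] {n : ℕ} (φ : F → F)
    {f : MvPolynomial (Fin (2 * n) ⊕ Fin (2 * n)) F} (hml : ∀ v, f.degreeOf v ≤ 1)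
    (hf : ∀ x : Fin (2 * n) ⊕ Fin (2 * n) → F, (∀ v, x v = 0 ∨ x v = 1) →
      eval x f = φ (eval x (Qtilde F n))) :
    ∃ a b c : F, f = C a + C b * Qtilde F n + C c * crossTermProduct n 1 1 (-2) := by
  classical
  obtain ⟨a, b, c, hφ⟩ := exists_quadratic_eq_on (s := {-1, 0, 1}) Finset.card_le_three φ
  refine ⟨a, b, c, eq_of_degreeOf_le_one_of_eval_eq hml (fun v => ?_) fun x hx => ?_⟩
  · refine (degreeOf_add_le _ _ _).trans (max_le ((degreeOf_add_le _ _ _).trans (max_le ?_ ?_)) ?_)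
    · rw [degreeOf_C]
      exact zero_le_one
    · rw [Qtilde_eq_crossTermProduct]
      exact (degreeOf_C_mul_le _ _ _).trans (degreeOf_crossTermProduct_le_one _ _ _ _)
    · exact (degreeOf_C_mul_le _ _ _).trans (degreeOf_crossTermProduct_le_one _ _ _ _)
  · have hidem : ∀ v, IsIdempotentElem (x v) := fun v =>
      IsIdempotentElem.iff_eq_zero_or_one.2 (hx v)
    simp only [hf x hx, hφ _ (eval_Qtilde_mem hidem), eval_Qtilde_sq hidem, map_add, map_mul,
      eval_C]

theorem coeff_nonsigma_degree2n_vanishes_of_inverse_of_Q_general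
    {F : Type*} [Field F] {n : ℕ} (φ : F → F)
    {f : MvPolynomial (Fin (2 * n) ⊕ Fin (2 * n)) F} (hml : ∀ v, f.degreeOf v ≤ 1)
    (hf : ∀ a b : Fin (2 * n) → F, (∀ i, a i = 0 ∨ a i = 1) → (∀ i, b i = 0 ∨ b i = 1) →
      eval (Sum.elim a b) f = φ (eval (Sum.elim a b) (Qtilde F n)))
    {A B : Finset (Fin (2 * n))} (hAB : A.card + B.card = 2 * n)
    (hns : ¬ ∃ σ : Fin n → Bool, A = Ssig n σ ∧ B = (Ssig n σ)ᶜ) :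
    coeff (setMonomial n A B) f = 0 := by
  have hcube : ∀ x : Fin (2 * n) ⊕ Fin (2 * n) → F, (∀ v, x v = 0 ∨ x v = 1) →
      eval x f = φ (eval x (Qtilde F n)) := fun x hx => by
    simpa only [Sum.elim_comp_inl_inr] using
      hf (x ∘ Sum.inl) (x ∘ Sum.inr) (fun i => hx (Sum.inl i)) (fun i => hx (Sum.inr i))
  have hne : 0 ≠ setMonomial n A B := fun h => by
    have hdeg := congrArg Finsupp.degree h
    rw [map_zero, degree_setMonomial, hAB] at hdeg
    have : IsEmpty (Fin (2 * n)) := hdeg ▸ Fin.isEmpty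
    exact hns ⟨fun _ => false, Subsingleton.elim _ _, Subsingleton.elim _ _⟩
  obtain ⟨a, b, c, rfl⟩ := exists_eq_quadratic_of_eval_eq_comp_Qtilde φ hml hcube
  simp only [Qtilde_eq_crossTermProduct, coeff_add, coeff_C, if_neg hne, coeff_C_mul,
    coeff_setMonomial_crossTermProduct_eq_zero _ _ _ hAB hns, mul_zero, add_zero]

/-- Let `F` have characteristic `0` or at least `5`, `n ≥ 1`,
`β ∉ {−1,0,1}`, and let `f` be multilinear and agree with `1/Q` on the Boolean cube. Then for
all `A, B ⊆ [2n]` with `|A| + |B| = 2n` that are not of the form `A = S_σ`, `B = [2n]∖S_σ`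
for some `σ ∈ {0,1}^n`, the coefficient in `f` of `x_A · y_B` is `0`. -/
theorem coeff_nonsigma_degree2n_vanishes_of_inverse_of_Q
    (F : Type*) [Field F] (n : ℕ) (hn : 1 ≤ n)
    (hchar : ringChar F = 0 ∨ 5 ≤ ringChar F)
    (β : F) (hβ : β ∉ ({-1, 0, 1} : Set F))
    (f : MvPolynomial (Fin (2 * n) ⊕ Fin (2 * n)) F)
    (hml : ∀ v, f.degreeOf v ≤ 1)
    (hf : ∀ a b : Fin (2 * n) → F, (∀ i, a i = 0 ∨ a i = 1) → (∀ i, b i = 0 ∨ b i = 1) →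
      eval (Sum.elim a b) f * eval (Sum.elim a b) (Qtilde F n - C β) = 1)
    (A B : Finset (Fin (2 * n))) (hAB : A.card + B.card = 2 * n)
    (hns : ¬ ∃ σ : Fin n → Bool, A = Ssig n σ ∧ B = (Ssig n σ)ᶜ) :
    coeff (setMonomial n A B) f = 0 :=
  coeff_nonsigma_degree2n_vanishes_of_inverse_of_Q_general (fun z => (z - β)⁻¹) hml
    (fun a b ha hb => by simpa using eq_inv_of_mul_eq_one_left (hf a b ha hb)) hAB hns
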